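/- Let η > 0, c ≠ 0, and let F : ℝ → ℝ be differentiable at η with |F′(η)| > |c|·η²/2. Set K(u,v,w) = F(u) + c·v. Then there exists ρ > 0 such that the only point p = (u,v,w) ∈ P^η with ‖p − Q₂‖ < ρ and K(p) = F(η) = K(Q₂) is p = Q₂ = (η,0,0). (Thus the long normal mode Q₂, sitting at the conical singularity of P^η, is isolated in its own level set, hence stable, whenever the slope of the level curve of K at u = η lies outside the interval [−η²/2, η²/2] determined by the two contour lines of P^η.) -/

import Mathlib

/-- The defining function `S^η(u,v,w) = (η−u)²u⁴/2 − 2(v² + w²)` of the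
twice-reduced phase space. -/
noncomputable def Sred (η : ℝ) (p : ℝ × ℝ × ℝ) : ℝ :=
  (η - p.1) ^ 2 * p.1 ^ 4 / 2 - 2 * (p.2.1 ^ 2 + p.2.2 ^ 2)

/-!
A point of the cone `S^η = 0` on the level set of `K` through `Q₂` satisfies `F u - F η = -c v`.
The right-hand side is at most `|c| (u² / 2) |u - η|` in absolute value, whereas the difference
quotient of `F` tends to `F' η`, and `|F' η|` exceeds the limit `|c| η² / 2` of `|c| u² / 2`. Near
`Q₂` this forces `u = η`, and over `u = η` the cone reduces to its apex `Q₂`.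
-/

open Filter Topology

theorem eventually_mul_norm_sub_lt_norm_sub_of_hasDerivAt {𝕜 E : Type*}
    [NontriviallyNormedField 𝕜] [NormedAddCommGroup E] [NormedSpace 𝕜 E]
    {f : 𝕜 → E} {f' : E} {a : 𝕜} {φ : 𝕜 → ℝ} {m : ℝ}
    (hf : HasDerivAt f f' a) (hφ : Tendsto φ (𝓝[≠] a) (𝓝 m)) (hm : m < ‖f'‖) :
    ∀ᶠ x in 𝓝[≠] a, φ x * ‖x - a‖ < ‖f x - f a‖ := by
  have hslope : ∀ᶠ x in 𝓝[≠] a, φ x < ‖slope f a x‖ :=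
    hφ.eventually_lt hf.tendsto_slope.norm hm
  filter_upwards [hslope, self_mem_nhdsWithin] with x hx hxa
  rwa [slope_def_module, norm_smul, norm_inv, inv_mul_eq_div,
    lt_div_iff₀ (norm_sub_pos_iff.mpr hxa)] at hx

theorem sred_eq_zero_iff {η u v w : ℝ} :
    Sred η (u, v, w) = 0 ↔ v ^ 2 + w ^ 2 = ((u - η) * (u ^ 2 / 2)) ^ 2 := by
  unfold Sred
  constructor <;> intro h <;> linarith

theorem abs_le_of_sred_eq_zero {η u v w : ℝ} (h : Sred η (u, v, w) = 0) :
    |v| ≤ u ^ 2 / 2 * |u - η| := by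
  have hsq : v ^ 2 ≤ ((u - η) * (u ^ 2 / 2)) ^ 2 := by
    linarith [sred_eq_zero_iff.mp h, sq_nonneg w]
  calc |v| ≤ |(u - η) * (u ^ 2 / 2)| := sq_le_sq.mp hsq
    _ = u ^ 2 / 2 * |u - η| := by
      rw [abs_mul, abs_of_nonneg (by positivity : 0 ≤ u ^ 2 / 2), mul_comm]

theorem sred_self_eq_zero_iff {η v w : ℝ} : Sred η (η, v, w) = 0 ↔ v = 0 ∧ w = 0 := by
  rw [sred_eq_zero_iff, sub_self, zero_mul, zero_pow two_ne_zero,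
    add_eq_zero_iff_of_nonneg (sq_nonneg v) (sq_nonneg w), sq_eq_zero_iff, sq_eq_zero_iff]

theorem long_mode_stable_general {η c F' : ℝ} {F : ℝ → ℝ} (hF : HasDerivAt F F' η)
    (hF' : |c| * η ^ 2 / 2 < |F'|) :
    ∀ᶠ p : ℝ × ℝ × ℝ in 𝓝 (η, 0, 0),
      Sred η p = 0 → F p.1 + c * p.2.1 = F η → p = (η, 0, 0) := by
  have hφ : Tendsto (fun u ↦ |c| * u ^ 2 / 2) (𝓝[≠] η) (𝓝 (|c| * η ^ 2 / 2)) :=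
    (Continuous.tendsto (by fun_prop) η).mono_left nhdsWithin_le_nhds
  have hslope : ∀ᶠ u in 𝓝 η, u ≠ η → |c| * u ^ 2 / 2 * |u - η| < |F u - F η| :=
    eventually_nhdsWithin_iff.mp (eventually_mul_norm_sub_lt_norm_sub_of_hasDerivAt hF hφ hF')
  filter_upwards [continuousAt_fst.eventually hslope]
  rintro ⟨u, v, w⟩ hlt hS hK
  obtain rfl : u = η := by
    by_contra hne
    have hle : |F u - F η| ≤ |c| * u ^ 2 / 2 * |u - η| :=
      calc |F u - F η| = |c| * |v| := by
            rw [← abs_mul, ← abs_neg (c * v)]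
            congr 1
            linarith
        _ ≤ |c| * (u ^ 2 / 2 * |u - η|) := by
            gcongr
            exact abs_le_of_sred_eq_zero hS
        _ = |c| * u ^ 2 / 2 * |u - η| := by ring
    exact (hlt hne).not_ge hle
  obtain ⟨rfl, rfl⟩ := sred_self_eq_zero_iff.mp hS
  rfl

/-- Stability of the long normal mode `Q₂ = (η,0,0)` at the conical singularity
of `P^η`: if `K(u,v,w) = F(u) + c·v` with `c ≠ 0` and `|F′(η)| > |c|·η²/2`
(the slope at `u = η` lies outside the interval determined by the two contour
lines of `P^η`), then `Q₂` is isolated in its own level set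
`{K = K(Q₂)} ∩ P^η`. -/
theorem long_mode_stable (η : ℝ) (hη : 0 < η) (c : ℝ) (hc : c ≠ 0)
    (F : ℝ → ℝ) (hF : DifferentiableAt ℝ F η)
    (hF' : |deriv F η| > |c| * η ^ 2 / 2) :
    ∃ ρ > 0, ∀ p : ℝ × ℝ × ℝ, Sred η p = 0 → 0 ≤ p.1 → p.1 ≤ η →
      ‖p - (η, (0 : ℝ), (0 : ℝ))‖ < ρ → F p.1 + c * p.2.1 = F η →
      p = (η, (0 : ℝ), (0 : ℝ)) := by
  obtain ⟨ρ, hρ, h⟩ := Metric.eventually_nhds_iff.mp (long_mode_stable_general hF.hasDerivAt hF')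
  exact ⟨ρ, hρ, fun p hS _ _ hp hK ↦ h (by rwa [dist_eq_norm]) hS hK⟩
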